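/- One-step recursion for the momentum gradient-tracking error (the key inequality in the proof of Theorem 1). Fix w, w' ∈ ℝ^d, m₀ ∈ ℝ^d and β ∈ (0,1]. On a probability space, let J₁,…,J_m be random 2×d matrices with E[J_i] = ∇g_i(w) and ‖J_i‖ ≤ C_g almost surely (operator norm), and let V₁,…,V_m be random vectors with V_i ∈ Ω almost surely (J_i and V_i may be dependent). Define ∇̃ = (1/m) Σ_{i=1}^m J_iᵀ ∇f(V_i) and M₁ = (1−β) m₀ + β ∇̃. Then E[‖M₁ − ∇F(w)‖²] ≤ (1−β)‖m₀ − ∇F(w')‖² + (2 L_F²/β)‖w − w'‖² + (5 β C_g² L_f²/m) Σ_{i=1}^m E[‖V_i − g_i(w)‖²] + 2 β² C_g² C_f². -/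

import Mathlib

open MeasureTheory

/-!
Put `p = ∇F(w)`, let `D = (1/m) ∑ Jᵢᵀ ∇f(Vᵢ)` be the estimator and let `S = (1/m) ∑ Jᵢᵀ ∇f(gᵢ(w))`
be the same estimator with exact inner values, so that `E S = p`. Then
`M₁ - p = (1 - β) ((m₀ - ∇F(w')) + (∇F(w') - p)) + β (D - S) + β (S - p)`.
The noise `S - p` is centred, so it is orthogonal to the constant terms, and its only cross term,
the one with the bias `D - S`, costs `β² (E‖D - S‖² + E‖S - p‖²)`; moreover `E‖S - p‖² ≤ E‖S‖²`.
In the remaining part, convexity of `‖·‖²` with weights `1 - β` and `β` keeps the factor `1 - β` in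
front of `‖m₀ - ∇F(w')‖²` and turns the drift `∇F(w') - p` into the term with `2 / β`.
-/

section Momentum

lemma norm_smul_add_add_smul_sq_le {E : Type*} [NormedAddCommGroup E] [NormedSpace ℝ E]
    {β : ℝ} (hβ : β ∈ Set.Ioc (0 : ℝ) 1) (a b u : E) :
    ‖(1 - β) • (a + b) + β • u‖ ^ 2
      ≤ (1 - β) * ‖a‖ ^ 2 + 2 / β * ‖b‖ ^ 2 + 2 * β * ‖u‖ ^ 2 := by
  obtain ⟨hβ0, hβ1⟩ := hβ
  have hconvex : ConvexOn ℝ Set.univ fun x : E => ‖x‖ ^ 2 :=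
    convexOn_univ_norm.pow (fun _ _ => norm_nonneg _) 2
  have hb : ‖((1 - β) / β) • b‖ ≤ ‖b‖ / β := by
    rw [norm_smul, Real.norm_of_nonneg (div_nonneg (sub_nonneg.2 hβ1) hβ0.le), div_mul_eq_mul_div]
    gcongr
    exact mul_le_of_le_one_left (norm_nonneg b) (by linarith)
  calc ‖(1 - β) • (a + b) + β • u‖ ^ 2
      = ‖(1 - β) • a + β • (((1 - β) / β) • b + u)‖ ^ 2 := by
        rw [smul_add β, smul_smul, mul_div_cancel₀ _ hβ0.ne', smul_add, add_assoc]
    _ ≤ (1 - β) * ‖a‖ ^ 2 + β * ‖((1 - β) / β) • b + u‖ ^ 2 :=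
        hconvex.2 (Set.mem_univ _) (Set.mem_univ _) (sub_nonneg.2 hβ1) hβ0.le (by ring)
    _ ≤ (1 - β) * ‖a‖ ^ 2 + β * (‖b‖ / β + ‖u‖) ^ 2 := by
        gcongr
        exact (norm_add_le _ _).trans (by gcongr)
    _ ≤ (1 - β) * ‖a‖ ^ 2 + β * (2 * ((‖b‖ / β) ^ 2 + ‖u‖ ^ 2)) := by
        gcongr
        exact add_sq_le
    _ = (1 - β) * ‖a‖ ^ 2 + 2 / β * ‖b‖ ^ 2 + 2 * β * ‖u‖ ^ 2 := by
        field_simp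
        ring

variable {E Ω : Type*} [NormedAddCommGroup E] [InnerProductSpace ℝ E] [CompleteSpace E]
  [MeasurableSpace Ω] {μ : Measure Ω} [IsProbabilityMeasure μ] {U N D S : Ω → E}

lemma integral_norm_sub_integral_sq_le (hS : MemLp S 2 μ) :
    ∫ ω, ‖S ω - ∫ ω', S ω' ∂μ‖ ^ 2 ∂μ ≤ ∫ ω, ‖S ω‖ ^ 2 ∂μ := by
  set p := ∫ ω, S ω ∂μ
  have hSint : Integrable S μ := hS.integrable one_le_two
  have hSsq : Integrable (fun ω => ‖S ω‖ ^ 2) μ := hS.integrable_norm_pow two_ne_zero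
  have hinner : Integrable (fun ω => 2 * inner ℝ p (S ω)) μ := (hSint.const_inner p).const_mul 2
  calc ∫ ω, ‖S ω - p‖ ^ 2 ∂μ
      = ∫ ω, (‖S ω‖ ^ 2 + ‖p‖ ^ 2 - 2 * inner ℝ p (S ω)) ∂μ := by
        simp only [norm_sub_sq_real, real_inner_comm p, sub_add_eq_add_sub]
    _ = ∫ ω, ‖S ω‖ ^ 2 ∂μ - ‖p‖ ^ 2 := by
        rw [integral_sub (hSsq.fun_add (integrable_const _)) hinner,
          integral_add hSsq (integrable_const _), integral_const_mul, integral_inner hSint,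
          real_inner_self_eq_norm_sq, integral_const, probReal_univ, one_smul]
        ring
    _ ≤ ∫ ω, ‖S ω‖ ^ 2 ∂μ := sub_le_self _ (sq_nonneg _)

lemma integral_norm_add_add_sq_le_of_integral_eq_zero (hU : MemLp U 2 μ) (hN : MemLp N 2 μ)
    (hN0 : ∫ ω, N ω ∂μ = 0) (x : E) :
    ∫ ω, ‖x + U ω + N ω‖ ^ 2 ∂μ
      ≤ ∫ ω, ‖x + U ω‖ ^ 2 ∂μ + ∫ ω, ‖U ω‖ ^ 2 ∂μ + 2 * ∫ ω, ‖N ω‖ ^ 2 ∂μ := by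
  have hxU : MemLp (fun ω => x + U ω) 2 μ := (memLp_const x).add hU
  have hNint : Integrable N μ := hN.integrable one_le_two
  have hxUsq : Integrable (fun ω => ‖x + U ω‖ ^ 2) μ := hxU.integrable_norm_pow two_ne_zero
  have hUsq : Integrable (fun ω => ‖U ω‖ ^ 2) μ := hU.integrable_norm_pow two_ne_zero
  have hNsq : Integrable (fun ω => 2 * ‖N ω‖ ^ 2) μ :=
    (hN.integrable_norm_pow two_ne_zero).const_mul 2
  have hinner : Integrable (fun ω => 2 * inner ℝ x (N ω)) μ := (hNint.const_inner x).const_mul 2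
  have hpointwise (ω : Ω) : ‖x + U ω + N ω‖ ^ 2
      ≤ ‖x + U ω‖ ^ 2 + ‖U ω‖ ^ 2 + 2 * ‖N ω‖ ^ 2 + 2 * inner ℝ x (N ω) := by
    have hUN : 0 ≤ ‖U ω - N ω‖ ^ 2 := sq_nonneg _
    rw [norm_sub_sq_real] at hUN
    rw [norm_add_sq_real (x + U ω), inner_add_left]
    linarith
  calc ∫ ω, ‖x + U ω + N ω‖ ^ 2 ∂μ
      ≤ ∫ ω, (‖x + U ω‖ ^ 2 + ‖U ω‖ ^ 2 + 2 * ‖N ω‖ ^ 2 + 2 * inner ℝ x (N ω)) ∂μ :=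
        integral_mono ((hxU.add hN).integrable_norm_pow two_ne_zero)
          (((hxUsq.add hUsq).add hNsq).add hinner) hpointwise
    _ = ∫ ω, ‖x + U ω‖ ^ 2 ∂μ + ∫ ω, ‖U ω‖ ^ 2 ∂μ + 2 * ∫ ω, ‖N ω‖ ^ 2 ∂μ := by
        rw [integral_add ((hxUsq.fun_add hUsq).fun_add hNsq) hinner,
          integral_add (hxUsq.fun_add hUsq) hNsq, integral_add hxUsq hUsq, integral_const_mul,
          integral_const_mul, integral_inner hNint, hN0, inner_zero_right, mul_zero, add_zero]

lemma integral_norm_momentum_sub_integral_sq_le {β : ℝ} (hβ : β ∈ Set.Ioc (0 : ℝ) 1)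
    (hD : MemLp D 2 μ) (hS : MemLp S 2 μ) (m₀ q : E) :
    ∫ ω, ‖((1 - β) • m₀ + β • D ω) - ∫ ω', S ω' ∂μ‖ ^ 2 ∂μ
      ≤ (1 - β) * ‖m₀ - q‖ ^ 2 + 2 / β * ‖q - ∫ ω, S ω ∂μ‖ ^ 2
        + 3 * β * ∫ ω, ‖D ω - S ω‖ ^ 2 ∂μ + 2 * β ^ 2 * ∫ ω, ‖S ω‖ ^ 2 ∂μ := by
  set p := ∫ ω, S ω ∂μ with hp
  set x := (1 - β) • ((m₀ - q) + (q - p))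
  have hbias : MemLp (fun ω => D ω - S ω) 2 μ := hD.sub hS
  have hbias_sq : Integrable (fun ω => ‖D ω - S ω‖ ^ 2) μ :=
    hbias.integrable_norm_pow two_ne_zero
  have hnoise : MemLp (fun ω => S ω - p) 2 μ := hS.sub (memLp_const p)
  have hnoise_mean : ∫ ω, β • (S ω - p) ∂μ = 0 := by
    rw [integral_smul, integral_sub (hS.integrable one_le_two) (integrable_const p), ← hp]
    simp
  have hsmul (Z : Ω → E) : ∫ ω, ‖β • Z ω‖ ^ 2 ∂μ = β ^ 2 * ∫ ω, ‖Z ω‖ ^ 2 ∂μ := by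
    simp only [norm_smul, mul_pow, integral_const_mul, Real.norm_eq_abs, sq_abs]
  have hdrift : ∫ ω, ‖x + β • (D ω - S ω)‖ ^ 2 ∂μ
      ≤ (1 - β) * ‖m₀ - q‖ ^ 2 + 2 / β * ‖q - p‖ ^ 2 + 2 * β * ∫ ω, ‖D ω - S ω‖ ^ 2 ∂μ := by
    calc ∫ ω, ‖x + β • (D ω - S ω)‖ ^ 2 ∂μ
        ≤ ∫ ω, ((1 - β) * ‖m₀ - q‖ ^ 2 + 2 / β * ‖q - p‖ ^ 2
            + 2 * β * ‖D ω - S ω‖ ^ 2) ∂μ :=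
          integral_mono
            (((memLp_const x).add (hbias.const_smul β)).integrable_norm_pow two_ne_zero)
            ((integrable_const _).add (hbias_sq.const_mul _))
            fun ω => norm_smul_add_add_smul_sq_le hβ _ _ _
      _ = _ := by
          rw [integral_add (integrable_const _) (hbias_sq.const_mul _), integral_const_mul,
            integral_const, probReal_univ, one_smul]
  have hβsq : β ^ 2 ≤ β := by nlinarith [hβ.1, hβ.2]
  calc ∫ ω, ‖((1 - β) • m₀ + β • D ω) - p‖ ^ 2 ∂μ
      = ∫ ω, ‖x + β • (D ω - S ω) + β • (S ω - p)‖ ^ 2 ∂μ := by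
        congr! 4 with ω
        module
    _ ≤ ∫ ω, ‖x + β • (D ω - S ω)‖ ^ 2 ∂μ + β ^ 2 * ∫ ω, ‖D ω - S ω‖ ^ 2 ∂μ
        + 2 * (β ^ 2 * ∫ ω, ‖S ω - p‖ ^ 2 ∂μ) := by
        rw [← hsmul, ← hsmul]
        exact integral_norm_add_add_sq_le_of_integral_eq_zero (hbias.const_smul β)
          (hnoise.const_smul β) hnoise_mean x
    _ ≤ ((1 - β) * ‖m₀ - q‖ ^ 2 + 2 / β * ‖q - p‖ ^ 2 + 2 * β * ∫ ω, ‖D ω - S ω‖ ^ 2 ∂μ)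
        + β * ∫ ω, ‖D ω - S ω‖ ^ 2 ∂μ + 2 * (β ^ 2 * ∫ ω, ‖S ω‖ ^ 2 ∂μ) := by
        gcongr ?_ + ?_ * _ + 2 * (_ * ?_)
        exact integral_norm_sub_integral_sq_le hS
    _ = _ := by ring

end Momentum

section AverageAdjoint

variable {ι E H : Type*} [Fintype ι] [NormedAddCommGroup E] [InnerProductSpace ℝ E]
  [CompleteSpace E] [NormedAddCommGroup H] [InnerProductSpace ℝ H] [CompleteSpace H]

/-- The finite-sum compositional objective `F x = (1 / |ι|) ∑ i, f (g i x)`. -/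
noncomputable def averageComp (f : H → ℝ) (g : ι → E → H) (x : E) : ℝ :=
  (Fintype.card ι : ℝ)⁻¹ * ∑ i, f (g i x)

/-- The average `(1 / |ι|) ∑ i, (T i)ᵀ (y i)`. It is the gradient of `averageComp f g` when `T i` is
the Jacobian of `g i` and `y i` is the gradient of `f` at `g i x`, and a gradient estimator when
these are replaced by random surrogates. -/
noncomputable def averageAdjoint (T : ι → E →L[ℝ] H) (y : ι → H) : E :=
  (Fintype.card ι : ℝ)⁻¹ • ∑ i, ContinuousLinearMap.adjoint (T i) (y i)

lemma averageAdjoint_sub_right (T : ι → E →L[ℝ] H) (y z : ι → H) :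
    averageAdjoint T y - averageAdjoint T z = averageAdjoint T fun i => y i - z i := by
  simp only [averageAdjoint, map_sub, Finset.sum_sub_distrib, smul_sub]

lemma norm_adjoint_apply_le {T : E →L[ℝ] H} {a : ℝ} (hT : ‖T‖ ≤ a) (y : H) :
    ‖ContinuousLinearMap.adjoint T y‖ ≤ a * ‖y‖ :=
  ContinuousLinearMap.le_of_opNorm_le _ (by rwa [LinearIsometryEquiv.norm_map]) y

lemma norm_adjoint_apply_sub_le {S T : E →L[ℝ] H} {a : ℝ} (hS : ‖S‖ ≤ a) (y z : H) :
    ‖ContinuousLinearMap.adjoint S y - ContinuousLinearMap.adjoint T z‖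
      ≤ a * ‖y - z‖ + ‖S - T‖ * ‖z‖ := by
  calc ‖ContinuousLinearMap.adjoint S y - ContinuousLinearMap.adjoint T z‖
      = ‖ContinuousLinearMap.adjoint S (y - z) + ContinuousLinearMap.adjoint (S - T) z‖ := by
        simp only [map_sub, sub_apply, sub_add_sub_cancel]
    _ ≤ a * ‖y - z‖ + ‖S - T‖ * ‖z‖ :=
        (norm_add_le _ _).trans
          (add_le_add (norm_adjoint_apply_le hS _) (norm_adjoint_apply_le le_rfl _))

lemma norm_averageAdjoint_sub_le [Nonempty ι] {S T : ι → E →L[ℝ] H} {y z : ι → H} {K : ℝ}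
    (h : ∀ i, ‖ContinuousLinearMap.adjoint (S i) (y i)
      - ContinuousLinearMap.adjoint (T i) (z i)‖ ≤ K) :
    ‖averageAdjoint S y - averageAdjoint T z‖ ≤ K := by
  have hcard : (0 : ℝ) < Fintype.card ι := Nat.cast_pos.2 Fintype.card_pos
  rw [averageAdjoint, averageAdjoint, ← smul_sub, ← Finset.sum_sub_distrib, norm_smul,
    Real.norm_of_nonneg (inv_nonneg.2 hcard.le), inv_mul_le_iff₀ hcard]
  simpa using norm_sum_le_of_le Finset.univ fun i _ => h i

lemma norm_averageAdjoint_sq_le {T : ι → E →L[ℝ] H} {a : ℝ} (hT : ∀ i, ‖T i‖ ≤ a) (y : ι → H) :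
    ‖averageAdjoint T y‖ ^ 2 ≤ a ^ 2 / Fintype.card ι * ∑ i, ‖y i‖ ^ 2 := by
  set n : ℝ := (Fintype.card ι : ℝ) with hn
  calc ‖averageAdjoint T y‖ ^ 2
      = n⁻¹ ^ 2 * ‖∑ i, ContinuousLinearMap.adjoint (T i) (y i)‖ ^ 2 := by
        rw [averageAdjoint, norm_smul, mul_pow, Real.norm_eq_abs, sq_abs]
    _ ≤ n⁻¹ ^ 2 * (∑ i, a * ‖y i‖) ^ 2 := by
        gcongr
        exact norm_sum_le_of_le _ fun i _ => norm_adjoint_apply_le (hT i) (y i)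
    _ ≤ n⁻¹ ^ 2 * (n * ∑ i, (a * ‖y i‖) ^ 2) := by
        gcongr
        simpa [hn] using sq_sum_le_card_mul_sum_sq (s := Finset.univ) (f := fun i => a * ‖y i‖)
    _ = a ^ 2 / n * ∑ i, ‖y i‖ ^ 2 := by
        simp only [mul_pow, ← Finset.mul_sum]
        rcases eq_or_ne n 0 with h0 | h0
        · simp [h0]
        · field_simp

end AverageAdjoint

section Gradient

variable {ι E H : Type*} [Fintype ι] [NormedAddCommGroup E] [InnerProductSpace ℝ E]
  [CompleteSpace E] [NormedAddCommGroup H] [InnerProductSpace ℝ H] [CompleteSpace H]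
  {f : H → ℝ} {g : ι → E → H}

lemma gradient_averageComp {x : E} (hf : ∀ i, DifferentiableAt ℝ f (g i x))
    (hg : ∀ i, DifferentiableAt ℝ (g i) x) :
    gradient (averageComp f g) x
      = averageAdjoint (fun i => fderiv ℝ (g i) x) fun i => gradient f (g i x) := by
  refine HasGradientAt.gradient (hasGradientAt_iff_hasFDerivAt.2 ?_)
  have hcomp (i : ι) := (hf i).hasGradientAt.hasFDerivAt.comp x (hg i).hasFDerivAt
  refine ((HasFDerivAt.fun_sum fun i (_ : i ∈ Finset.univ) => hcomp i).const_mul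
    (Fintype.card ι : ℝ)⁻¹).congr_fderiv ?_
  ext v
  simp [averageAdjoint, ContinuousLinearMap.adjoint_inner_left]

lemma norm_gradient_averageComp_sub_le [Nonempty ι] {K : Set H} {Cf Lf Cg Lg : ℝ} (hLf : 0 ≤ Lf)
    (hCg : 0 ≤ Cg) (hf : ∀ u ∈ K, DifferentiableAt ℝ f u) (hf_bdd : ∀ u ∈ K, ‖gradient f u‖ ≤ Cf)
    (hf_lip : ∀ u ∈ K, ∀ v ∈ K, ‖gradient f u - gradient f v‖ ≤ Lf * ‖u - v‖)
    (hg : ∀ i, Differentiable ℝ (g i)) (hg_mem : ∀ i x, g i x ∈ K)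
    (hg_lip : ∀ i x y, ‖g i x - g i y‖ ≤ Cg * ‖x - y‖)
    (hg_deriv_lip : ∀ i x y, ‖fderiv ℝ (g i) x - fderiv ℝ (g i) y‖ ≤ Lg * ‖x - y‖) (x y : E) :
    ‖gradient (averageComp f g) x - gradient (averageComp f g) y‖
      ≤ (Cg ^ 2 * Lf + Cf * Lg) * ‖x - y‖ := by
  have hgradient (z : E) := gradient_averageComp (fun i => hf _ (hg_mem i z)) fun i => hg i z
  have hfderiv (i : ι) : ‖fderiv ℝ (g i) x‖ ≤ Cg :=
    norm_fderiv_le_of_lip' ℝ hCg (.of_forall fun z => hg_lip i z x)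
  rw [hgradient, hgradient]
  refine norm_averageAdjoint_sub_le fun i => ?_
  calc _ ≤ Cg * ‖gradient f (g i x) - gradient f (g i y)‖
        + ‖fderiv ℝ (g i) x - fderiv ℝ (g i) y‖ * ‖gradient f (g i y)‖ :=
        norm_adjoint_apply_sub_le (hfderiv i) _ _
    _ ≤ Cg * (Lf * (Cg * ‖x - y‖)) + Lg * ‖x - y‖ * Cf := by
        gcongr
        · exact (hf_lip _ (hg_mem i x) _ (hg_mem i y)).trans (by gcongr; exact hg_lip i x y)
        · exact (norm_nonneg _).trans (hg_deriv_lip i x y)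
        · exact hg_deriv_lip i x y
        · exact hf_bdd _ (hg_mem i y)
    _ = (Cg ^ 2 * Lf + Cf * Lg) * ‖x - y‖ := by ring

end Gradient

lemma aestronglyMeasurable_comp_of_continuousOn {Ω X Y : Type*} [MeasurableSpace Ω]
    {μ : Measure Ω} [TopologicalSpace X] [TopologicalSpace.PseudoMetrizableSpace X]
    [TopologicalSpace Y] {s : Set X} {φ : X → Y} {V : Ω → X}
    (hφ : ContinuousOn φ s) (hV : AEStronglyMeasurable V μ) (hVs : ∀ᵐ ω ∂μ, V ω ∈ s) :
    AEStronglyMeasurable (fun ω => φ (V ω)) μ := by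
  classical
  rcases s.eq_empty_or_nonempty with rfl | ⟨x₀, hx₀⟩
  · have hμ : μ = 0 := by simpa using hVs
    exact hμ ▸ aestronglyMeasurable_zero_measure _
  let W (ω : Ω) : s := if h : V ω ∈ s then ⟨V ω, h⟩ else ⟨x₀, hx₀⟩
  have hVW : ∀ᵐ ω ∂μ, V ω = W ω := by
    filter_upwards [hVs] with ω hω
    simp only [W, dif_pos hω]
  have hW : AEStronglyMeasurable W μ :=
    Topology.IsEmbedding.subtypeVal.aestronglyMeasurable_comp_iff.1 (hV.congr hVW)
  refine (hφ.domRestrict.comp_aestronglyMeasurable hW).congr ?_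
  filter_upwards [hVW] with ω hω
  simp only [Set.domRestrict_apply, hω]

section LipschitzComp

variable {Ω X Y : Type*} [MeasurableSpace Ω] {μ : Measure Ω} [NormedAddCommGroup X]
  [NormedAddCommGroup Y] {s : Set X} {φ : X → Y} {L : ℝ} {V : Ω → X}

lemma memLp_comp_of_norm_sub_le [IsFiniteMeasure μ] {p : ENNReal}
    (hφ : ∀ u ∈ s, ∀ v ∈ s, ‖φ u - φ v‖ ≤ L * ‖u - v‖) (hV : MemLp V p μ)
    (hVs : ∀ᵐ ω ∂μ, V ω ∈ s) : MemLp (fun ω => φ (V ω)) p μ := by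
  rcases s.eq_empty_or_nonempty with rfl | ⟨x₀, hx₀⟩
  · have hμ : μ = 0 := by simpa using hVs
    exact hμ ▸ memLp_measure_zero
  have hφ_cont : ContinuousOn φ s :=
    (LipschitzOnWith.of_dist_le' fun u hu v hv => by
      simpa only [dist_eq_norm] using hφ u hu v hv).continuousOn
  have hdiff : MemLp (fun ω => φ (V ω) - φ x₀) p μ := by
    refine (hV.sub (memLp_const x₀)).of_le_mul (c := L)
      ((aestronglyMeasurable_comp_of_continuousOn hφ_cont hV.1 hVs).sub
        aestronglyMeasurable_const) ?_
    filter_upwards [hVs] with ω hω using hφ _ hω _ hx₀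
  simpa only [Pi.add_def, sub_add_cancel] using hdiff.add (memLp_const (φ x₀))

lemma integral_norm_comp_sub_sq_le [IsFiniteMeasure μ] {x : X}
    (hφ : ∀ u ∈ s, ∀ v ∈ s, ‖φ u - φ v‖ ≤ L * ‖u - v‖) (hV : MemLp V 2 μ)
    (hVs : ∀ᵐ ω ∂μ, V ω ∈ s) (hx : x ∈ s) :
    ∫ ω, ‖φ (V ω) - φ x‖ ^ 2 ∂μ ≤ L ^ 2 * ∫ ω, ‖V ω - x‖ ^ 2 ∂μ := by
  rw [← integral_const_mul]
  refine integral_mono_of_nonneg (.of_forall fun _ => sq_nonneg _)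
    (((hV.sub (memLp_const x)).integrable_norm_pow two_ne_zero).const_mul _) ?_
  filter_upwards [hVs] with ω hω
  rw [← mul_pow]
  exact pow_le_pow_left₀ (norm_nonneg _) (hφ _ hω _ hx) 2

end LipschitzComp

section RandomAdjoint

variable {ι E H Ω : Type*} [Fintype ι] [NormedAddCommGroup E] [InnerProductSpace ℝ E]
  [CompleteSpace E] [NormedAddCommGroup H] [InnerProductSpace ℝ H] [CompleteSpace H]
  [MeasurableSpace Ω] {μ : Measure Ω} {J : ι → Ω → E →L[ℝ] H} {Y : ι → Ω → H} {a : ℝ}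

lemma aestronglyMeasurable_adjoint_apply {T : Ω → E →L[ℝ] H} {y : Ω → H}
    (hT : AEStronglyMeasurable T μ) (hy : AEStronglyMeasurable y μ) :
    AEStronglyMeasurable (fun ω => ContinuousLinearMap.adjoint (T ω) (y ω)) μ :=
  isBoundedBilinearMap_apply.continuous.comp_aestronglyMeasurable
    ((ContinuousLinearMap.adjoint.continuous.comp_aestronglyMeasurable hT).prodMk hy)

lemma integrable_adjoint_apply {T : Ω → E →L[ℝ] H} (hT : Integrable T μ) (y : H) :
    Integrable (fun ω => ContinuousLinearMap.adjoint (T ω) y) μ :=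
  (hT.norm.mul_const ‖y‖).mono' (aestronglyMeasurable_adjoint_apply hT.1 aestronglyMeasurable_const)
    (.of_forall fun _ => norm_adjoint_apply_le le_rfl y)

lemma integral_adjoint_apply {T : Ω → E →L[ℝ] H} (hT : Integrable T μ) (y : H) :
    ∫ ω, ContinuousLinearMap.adjoint (T ω) y ∂μ
      = ContinuousLinearMap.adjoint (∫ ω, T ω ∂μ) y := by
  refine ext_inner_left ℝ fun c => ?_
  calc inner ℝ c (∫ ω, ContinuousLinearMap.adjoint (T ω) y ∂μ)
      = ∫ ω, inner ℝ y (T ω c) ∂μ := by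
        rw [← integral_inner (integrable_adjoint_apply hT y)]
        simp only [ContinuousLinearMap.adjoint_inner_right, real_inner_comm y]
    _ = inner ℝ c (ContinuousLinearMap.adjoint (∫ ω, T ω ∂μ) y) := by
        rw [integral_inner (hT.apply_continuousLinearMap c),
          ← ContinuousLinearMap.integral_apply hT, ContinuousLinearMap.adjoint_inner_right,
          real_inner_comm]

lemma memLp_averageAdjoint {p : ENNReal} (hJ : ∀ i, AEStronglyMeasurable (J i) μ)
    (hJ_bdd : ∀ i, ∀ᵐ ω ∂μ, ‖J i ω‖ ≤ a) (hY : ∀ i, MemLp (Y i) p μ) :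
    MemLp (fun ω => averageAdjoint (J · ω) (Y · ω)) p μ := by
  have hterm (i : ι) : MemLp (fun ω => ContinuousLinearMap.adjoint (J i ω) (Y i ω)) p μ := by
    refine (hY i).of_le_mul (c := a) (aestronglyMeasurable_adjoint_apply (hJ i) (hY i).1) ?_
    filter_upwards [hJ_bdd i] with ω hω using norm_adjoint_apply_le hω _
  exact (memLp_finsetSum Finset.univ fun i _ => hterm i).const_smul (Fintype.card ι : ℝ)⁻¹

lemma integral_averageAdjoint (hJ : ∀ i, Integrable (J i) μ) (y : ι → H) :
    ∫ ω, averageAdjoint (J · ω) y ∂μ = averageAdjoint (fun i => ∫ ω, J i ω ∂μ) y := by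
  simp only [averageAdjoint, integral_smul, integral_adjoint_apply (hJ _),
    integral_finsetSum _ fun i _ => integrable_adjoint_apply (hJ i) (y i)]

lemma integral_norm_averageAdjoint_sq_le (hJ_bdd : ∀ i, ∀ᵐ ω ∂μ, ‖J i ω‖ ≤ a)
    (hY : ∀ i, MemLp (Y i) 2 μ) :
    ∫ ω, ‖averageAdjoint (J · ω) (Y · ω)‖ ^ 2 ∂μ
      ≤ a ^ 2 / Fintype.card ι * ∑ i, ∫ ω, ‖Y i ω‖ ^ 2 ∂μ := by
  have hYsq (i : ι) : Integrable (fun ω => ‖Y i ω‖ ^ 2) μ := (hY i).integrable_norm_pow two_ne_zero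
  rw [← integral_finsetSum _ fun i _ => hYsq i, ← integral_const_mul]
  refine integral_mono_of_nonneg (.of_forall fun _ => sq_nonneg _)
    ((integrable_finsetSum _ fun i _ => hYsq i).const_mul _) ?_
  filter_upwards [ae_all_iff.2 hJ_bdd] with ω hω using norm_averageAdjoint_sq_le hω _

lemma integral_norm_averageAdjoint_const_sq_le [Nonempty ι] [IsProbabilityMeasure μ] {b : ℝ}
    {y : ι → H} (hJ_bdd : ∀ i, ∀ᵐ ω ∂μ, ‖J i ω‖ ≤ a) (hy : ∀ i, ‖y i‖ ≤ b) :
    ∫ ω, ‖averageAdjoint (J · ω) y‖ ^ 2 ∂μ ≤ a ^ 2 * b ^ 2 := by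
  calc ∫ ω, ‖averageAdjoint (J · ω) y‖ ^ 2 ∂μ
      ≤ a ^ 2 / Fintype.card ι * ∑ i, ∫ _, ‖y i‖ ^ 2 ∂μ :=
        integral_norm_averageAdjoint_sq_le hJ_bdd fun _ => memLp_const _
    _ ≤ a ^ 2 / Fintype.card ι * ∑ _ : ι, b ^ 2 := by
        simp only [integral_const, probReal_univ, one_smul]
        gcongr with i
        exact hy i
    _ = a ^ 2 * b ^ 2 := by
        rw [Finset.sum_const, Finset.card_univ, nsmul_eq_mul]
        field_simp

lemma integral_norm_averageAdjoint_comp_sub_sq_le [IsFiniteMeasure μ] {X : Type*}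
    [NormedAddCommGroup X] {s : Set X} {φ : X → H} {L : ℝ} {V : ι → Ω → X} {x : ι → X}
    (hJ_bdd : ∀ i, ∀ᵐ ω ∂μ, ‖J i ω‖ ≤ a)
    (hφ : ∀ u ∈ s, ∀ v ∈ s, ‖φ u - φ v‖ ≤ L * ‖u - v‖) (hV : ∀ i, MemLp (V i) 2 μ)
    (hVs : ∀ i, ∀ᵐ ω ∂μ, V i ω ∈ s) (hx : ∀ i, x i ∈ s) :
    ∫ ω, ‖averageAdjoint (J · ω) (fun i => φ (V i ω))
        - averageAdjoint (J · ω) (fun i => φ (x i))‖ ^ 2 ∂μ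
      ≤ a ^ 2 * L ^ 2 / Fintype.card ι * ∑ i, ∫ ω, ‖V i ω - x i‖ ^ 2 ∂μ := by
  have hφV (i : ι) : MemLp (fun ω => φ (V i ω) - φ (x i)) 2 μ :=
    (memLp_comp_of_norm_sub_le hφ (hV i) (hVs i)).sub (memLp_const _)
  simp only [averageAdjoint_sub_right]
  calc ∫ ω, ‖averageAdjoint (J · ω) fun i => φ (V i ω) - φ (x i)‖ ^ 2 ∂μ
      ≤ a ^ 2 / Fintype.card ι * ∑ i, ∫ ω, ‖φ (V i ω) - φ (x i)‖ ^ 2 ∂μ :=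
        integral_norm_averageAdjoint_sq_le hJ_bdd hφV
    _ ≤ a ^ 2 / Fintype.card ι * ∑ i, L ^ 2 * ∫ ω, ‖V i ω - x i‖ ^ 2 ∂μ := by
        gcongr with i
        exact integral_norm_comp_sub_sq_le hφ (hV i) (hVs i) (hx i)
    _ = a ^ 2 * L ^ 2 / Fintype.card ι * ∑ i, ∫ ω, ‖V i ω - x i‖ ^ 2 ∂μ := by
        rw [← Finset.mul_sum]
        ring

end RandomAdjoint

lemma isBounded_setOf_forall_mem_Icc {ι : Type*} [Finite ι] (a b : ι → ℝ) :
    Bornology.IsBounded {u : EuclideanSpace ℝ ι | ∀ i, u i ∈ Set.Icc (a i) (b i)} := by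
  cases nonempty_fintype ι
  exact ((PiLp.antilipschitzWith_ofLp 2 fun _ : ι => ℝ).isBounded_preimage
    (Metric.isBounded_Icc a b)).subset fun _ hu => ⟨fun i => (hu i).1, fun i => (hu i).2⟩

lemma memLp_of_ae_mem_isBounded {Ω X : Type*} [MeasurableSpace Ω] {μ : Measure Ω}
    [IsFiniteMeasure μ] [NormedAddCommGroup X] {s : Set X} (hs : Bornology.IsBounded s) {V : Ω → X}
    {p : ENNReal} (hV : AEStronglyMeasurable V μ) (hVs : ∀ᵐ ω ∂μ, V ω ∈ s) : MemLp V p μ := by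
  obtain ⟨R, hR⟩ := hs.exists_norm_le
  exact .of_bound hV R (hVs.mono fun ω hω => hR _ hω)

theorem momentum_tracking_error_recursion_general {ι E H Ω : Type*} [Fintype ι] [Nonempty ι]
    [NormedAddCommGroup E] [InnerProductSpace ℝ E] [CompleteSpace E]
    [NormedAddCommGroup H] [InnerProductSpace ℝ H] [CompleteSpace H]
    [MeasurableSpace Ω] {μ : Measure Ω} [IsProbabilityMeasure μ]
    {K : Set H} {f : H → ℝ} {g : ι → E → H} {Cf Lf Cg Lg : ℝ} (hLf : 0 ≤ Lf) (hCg : 0 ≤ Cg)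
    (hf : ∀ u ∈ K, DifferentiableAt ℝ f u) (hf_bdd : ∀ u ∈ K, ‖gradient f u‖ ≤ Cf)
    (hf_lip : ∀ u ∈ K, ∀ v ∈ K, ‖gradient f u - gradient f v‖ ≤ Lf * ‖u - v‖)
    (hg : ∀ i, Differentiable ℝ (g i)) (hg_mem : ∀ i x, g i x ∈ K)
    (hg_lip : ∀ i x y, ‖g i x - g i y‖ ≤ Cg * ‖x - y‖)
    (hg_deriv_lip : ∀ i x y, ‖fderiv ℝ (g i) x - fderiv ℝ (g i) y‖ ≤ Lg * ‖x - y‖)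
    {β : ℝ} (hβ : β ∈ Set.Ioc (0 : ℝ) 1) {J : ι → Ω → E →L[ℝ] H} {V : ι → Ω → H}
    (hJ : ∀ i, AEStronglyMeasurable (J i) μ) (hJ_bdd : ∀ i, ∀ᵐ ω ∂μ, ‖J i ω‖ ≤ Cg)
    (hV : ∀ i, MemLp (V i) 2 μ) (hV_mem : ∀ i, ∀ᵐ ω ∂μ, V i ω ∈ K)
    (w w' m₀ : E) (hJ_mean : ∀ i, ∫ ω, J i ω ∂μ = fderiv ℝ (g i) w) :
    ∫ ω, ‖((1 - β) • m₀ + β • averageAdjoint (J · ω) fun i => gradient f (V i ω))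
        - gradient (averageComp f g) w‖ ^ 2 ∂μ
      ≤ (1 - β) * ‖m₀ - gradient (averageComp f g) w'‖ ^ 2
        + (2 * (Cg ^ 2 * Lf + Cf * Lg) ^ 2 / β) * ‖w - w'‖ ^ 2
        + (3 * β * Cg ^ 2 * Lf ^ 2 / Fintype.card ι) * ∑ i, ∫ ω, ‖V i ω - g i w‖ ^ 2 ∂μ
        + 2 * β ^ 2 * Cg ^ 2 * Cf ^ 2 := by
  set S : Ω → E := fun ω => averageAdjoint (J · ω) fun i => gradient f (g i w)
  set D : Ω → E := fun ω => averageAdjoint (J · ω) fun i => gradient f (V i ω)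
  have hS : MemLp S 2 μ := memLp_averageAdjoint hJ hJ_bdd fun _ => memLp_const _
  have hD : MemLp D 2 μ := memLp_averageAdjoint hJ hJ_bdd fun i =>
    memLp_comp_of_norm_sub_le hf_lip (hV i) (hV_mem i)
  have hS_mean : ∫ ω, S ω ∂μ = gradient (averageComp f g) w := by
    rw [integral_averageAdjoint fun i => .of_bound (hJ i) Cg (hJ_bdd i),
      gradient_averageComp (fun i => hf _ (hg_mem i w)) fun i => hg i w]
    simp only [hJ_mean]
  have hdrift : ‖gradient (averageComp f g) w' - gradient (averageComp f g) w‖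
      ≤ (Cg ^ 2 * Lf + Cf * Lg) * ‖w - w'‖ := by
    rw [norm_sub_rev w]
    exact norm_gradient_averageComp_sub_le hLf hCg hf hf_bdd hf_lip hg hg_mem hg_lip hg_deriv_lip
      w' w
  have hbias : ∫ ω, ‖D ω - S ω‖ ^ 2 ∂μ
      ≤ Cg ^ 2 * Lf ^ 2 / Fintype.card ι * ∑ i, ∫ ω, ‖V i ω - g i w‖ ^ 2 ∂μ :=
    integral_norm_averageAdjoint_comp_sub_sq_le hJ_bdd hf_lip hV hV_mem (hg_mem · w)
  have hnoise : ∫ ω, ‖S ω‖ ^ 2 ∂μ ≤ Cg ^ 2 * Cf ^ 2 :=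
    integral_norm_averageAdjoint_const_sq_le hJ_bdd fun i => hf_bdd _ (hg_mem i w)
  have hβ0 : 0 < β := hβ.1
  calc ∫ ω, ‖((1 - β) • m₀ + β • D ω) - gradient (averageComp f g) w‖ ^ 2 ∂μ
      ≤ (1 - β) * ‖m₀ - gradient (averageComp f g) w'‖ ^ 2
        + 2 / β * ‖gradient (averageComp f g) w' - gradient (averageComp f g) w‖ ^ 2
        + 3 * β * ∫ ω, ‖D ω - S ω‖ ^ 2 ∂μ + 2 * β ^ 2 * ∫ ω, ‖S ω‖ ^ 2 ∂μ := by
        rw [← hS_mean]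
        exact integral_norm_momentum_sub_integral_sq_le hβ hD hS m₀ _
    _ ≤ (1 - β) * ‖m₀ - gradient (averageComp f g) w'‖ ^ 2
        + 2 / β * ((Cg ^ 2 * Lf + Cf * Lg) * ‖w - w'‖) ^ 2
        + 3 * β * (Cg ^ 2 * Lf ^ 2 / Fintype.card ι * ∑ i, ∫ ω, ‖V i ω - g i w‖ ^ 2 ∂μ)
        + 2 * β ^ 2 * (Cg ^ 2 * Cf ^ 2) := by gcongr
    _ = _ := by ring

/-- One-step recursion for the momentum gradient-tracking error
(the key inequality in the proof of Theorem 1). Here `L_F = C_g² L_f + C_f L_g`. -/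
theorem momentum_tracking_error_recursion
    (d m : ℕ) (hd : 0 < d) (hm : 0 < m)
    (C B₂ A : ℝ) (hC : 0 < C) (hCB : C ≤ B₂) (hA : 0 < A)
    (Ωset : Set (EuclideanSpace ℝ (Fin 2)))
    (hΩ : Ωset = {u : EuclideanSpace ℝ (Fin 2) | 0 ≤ u 0 ∧ u 0 ≤ A ∧ C ≤ u 1 ∧ u 1 ≤ B₂})
    (f : EuclideanSpace ℝ (Fin 2) → ℝ)
    (hf : ∀ u, f u = -(u 0) / (u 1))
    (Cf Lf Cg Lg : ℝ) (hCf : 0 < Cf) (hLf : 0 < Lf) (hCg : 0 < Cg) (hLg : 0 < Lg)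
    (hf_lip : ∀ u ∈ Ωset, ∀ v ∈ Ωset, |f u - f v| ≤ Cf * ‖u - v‖)
    (hf_grad_bdd : ∀ u ∈ Ωset, ‖gradient f u‖ ≤ Cf)
    (hf_grad_lip : ∀ u ∈ Ωset, ∀ v ∈ Ωset, ‖gradient f u - gradient f v‖ ≤ Lf * ‖u - v‖)
    (g : Fin m → EuclideanSpace ℝ (Fin d) → EuclideanSpace ℝ (Fin 2))
    (hg_diff : ∀ i, ContDiff ℝ 1 (g i))
    (hg_mem : ∀ i w, g i w ∈ Ωset)
    (hg_lip : ∀ i w w', ‖g i w - g i w'‖ ≤ Cg * ‖w - w'‖)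
    (hg_grad_lip : ∀ i w w', ‖fderiv ℝ (g i) w - fderiv ℝ (g i) w'‖ ≤ Lg * ‖w - w'‖)
    (F : EuclideanSpace ℝ (Fin d) → ℝ)
    (hF : ∀ w, F w = (m : ℝ)⁻¹ * ∑ i, f (g i w))
    (w w' m₀ : EuclideanSpace ℝ (Fin d))
    (β : ℝ) (hβ : β ∈ Set.Ioc (0 : ℝ) 1)
    (Ω₀ : Type*) [MeasurableSpace Ω₀] (μ : Measure Ω₀) [IsProbabilityMeasure μ]
    (J : Fin m → Ω₀ → (EuclideanSpace ℝ (Fin d) →L[ℝ] EuclideanSpace ℝ (Fin 2)))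
    (V : Fin m → Ω₀ → EuclideanSpace ℝ (Fin 2))
    (hJmeas : ∀ i, AEStronglyMeasurable (J i) μ)
    (hVmeas : ∀ i, AEStronglyMeasurable (V i) μ)
    (hJint : ∀ i, Integrable (J i) μ)
    (hJmean : ∀ i, ∫ ω, J i ω ∂μ = fderiv ℝ (g i) w)
    (hJbdd : ∀ i, ∀ᵐ ω ∂μ, ‖J i ω‖ ≤ Cg)
    (hVmem : ∀ i, ∀ᵐ ω ∂μ, V i ω ∈ Ωset) :
    ∫ ω, ‖((1 - β) • m₀
        + β • ((m : ℝ)⁻¹ • ∑ i, (ContinuousLinearMap.adjoint (J i ω)) (gradient f (V i ω))))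
        - gradient F w‖ ^ 2 ∂μ
      ≤ (1 - β) * ‖m₀ - gradient F w'‖ ^ 2
        + (2 * (Cg ^ 2 * Lf + Cf * Lg) ^ 2 / β) * ‖w - w'‖ ^ 2
        + (5 * β * Cg ^ 2 * Lf ^ 2 / m) * ∑ i, ∫ ω, ‖V i ω - g i w‖ ^ 2 ∂μ
        + 2 * β ^ 2 * Cg ^ 2 * Cf ^ 2 := by
  have hf_diff : ∀ u ∈ Ωset, DifferentiableAt ℝ f u := by
    intro u hu
    rw [hΩ] at hu
    have hu1 : u 1 ≠ 0 := (hC.trans_le hu.2.2.1).ne'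
    rw [funext hf]
    fun_prop (disch := assumption)
  have hΩ_bdd : Bornology.IsBounded Ωset := by
    refine (isBounded_setOf_forall_mem_Icc ![0, C] ![A, B₂]).subset fun u hu => ?_
    simpa [hΩ, Fin.forall_fin_two, and_assoc] using hu
  obtain rfl : F = averageComp f g := funext fun x => by rw [hF, averageComp, Fintype.card_fin]
  have : Nonempty (Fin m) := ⟨⟨0, hm⟩⟩
  have hrec := momentum_tracking_error_recursion_general hLf.le hCg.le hf_diff hf_grad_bdd
    hf_grad_lip (fun i => (hg_diff i).differentiable one_ne_zero) hg_mem hg_lip hg_grad_lip hβ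
    hJmeas hJbdd (fun i => memLp_of_ae_mem_isBounded hΩ_bdd (hVmeas i) (hVmem i)) hVmem
    w w' m₀ hJmean
  simp only [averageAdjoint, Fintype.card_fin] at hrec
  refine hrec.trans ?_
  gcongr
  · exact hβ.1.le
  · norm_num
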